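/- arXiv:2009.13073 — 5 statements merged into one kernel-verified Lean document; each statement's English description precedes it below -/
import Mathlib

section
/- Let v, y, η ∈ ℝ^d, and let δ₁, δ₂ be real numbers with δ₂ > 0 and δ₁ − 1/2 + δ₂/2 ≤ 0. Set A = 1 + |v|² + |η|² + |v∧η|² and B = 1 + |v|² + |y|² + |v∧y|². If A ≤ B^{δ₂}, then B^{δ₁−1} · |⟨y,η⟩ + (v∧y)·(v∧η)| ≤ 1. -/
open scoped RealInnerProductSpace

/-!
The bilinear form `Q(y, η) = ⟨y,η⟩ + (v∧y)·(v∧η)` is symmetric and positive semidefinite, so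
Cauchy–Schwarz (`wedgeForm_sq_le`) gives `Q(y, η)² ≤ Q(y, y) Q(η, η) ≤ B A ≤ B^(1 + δ₂)`.
Hence `B^(δ₁ - 1) |Q(y, η)| ≤ B^(δ₁ - 1/2 + δ₂/2) ≤ 1`, because `B ≥ 1` and the exponent is
nonpositive.
-/

lemma wedge_sq_nonneg {d : ℕ} (v x : EuclideanSpace ℝ (Fin d)) :
    0 ≤ ‖v‖ ^ 2 * ‖x‖ ^ 2 - ⟪v, x⟫ ^ 2 := by
  have h := sq_le_sq' (neg_le_of_abs_le (abs_real_inner_le_norm v x)) (real_inner_le_norm v x)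
  rw [mul_pow] at h
  linarith

/-- Cauchy–Schwarz for the form `⟨y,η⟩ + (v∧y)·(v∧η)`. -/
lemma wedgeForm_sq_le {d : ℕ} (v y η : EuclideanSpace ℝ (Fin d)) :
    (⟪y, η⟫ + (‖v‖ ^ 2 * ⟪y, η⟫ - ⟪v, y⟫ * ⟪v, η⟫)) ^ 2 ≤
      (‖y‖ ^ 2 + (‖v‖ ^ 2 * ‖y‖ ^ 2 - ⟪v, y⟫ ^ 2)) *
        (‖η‖ ^ 2 + (‖v‖ ^ 2 * ‖η‖ ^ 2 - ⟪v, η⟫ ^ 2)) := by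
  -- The quadratic polynomial `t ↦ Q(y + t η, y + t η)` is nonnegative.
  have key : ∀ t : ℝ, 0 ≤ (‖η‖ ^ 2 + (‖v‖ ^ 2 * ‖η‖ ^ 2 - ⟪v, η⟫ ^ 2)) * (t * t) +
      (2 * (⟪y, η⟫ + (‖v‖ ^ 2 * ⟪y, η⟫ - ⟪v, y⟫ * ⟪v, η⟫))) * t +
      (‖y‖ ^ 2 + (‖v‖ ^ 2 * ‖y‖ ^ 2 - ⟪v, y⟫ ^ 2)) := by
    intro t
    have h1 := wedge_sq_nonneg v (y + t • η)
    have h2 := sq_nonneg ‖y + t • η‖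
    have h3 : ‖y + t • η‖ ^ 2 = ‖y‖ ^ 2 + 2 * (t * ⟪y, η⟫) + t ^ 2 * ‖η‖ ^ 2 := by
      rw [norm_add_sq_real, real_inner_smul_right, norm_smul, mul_pow, Real.norm_eq_abs, sq_abs]
    rw [inner_add_right, real_inner_smul_right] at h1
    rw [h3] at h1 h2
    linarith
  have h := discrim_le_zero key
  rw [discrim] at h
  linarith

/-- Zeroth-order bound `|θ| ≤ 1` on the support of the cutoff:
if `A ≤ B^δ₂` and `δ₁ − 1/2 + δ₂/2 ≤ 0`, then
`B^{δ₁−1}·|⟨y,η⟩ + (v∧y)·(v∧η)| ≤ 1`. -/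
theorem stmt_4 (d : ℕ) (v y η : EuclideanSpace ℝ (Fin d)) (δ₁ δ₂ : ℝ)
    (hδ₂ : 0 < δ₂) (hδ : δ₁ - 1 / 2 + δ₂ / 2 ≤ 0)
    (A B : ℝ)
    (hA : A = 1 + ‖v‖ ^ 2 + ‖η‖ ^ 2 + (‖v‖ ^ 2 * ‖η‖ ^ 2 - ⟪v, η⟫ ^ 2))
    (hB : B = 1 + ‖v‖ ^ 2 + ‖y‖ ^ 2 + (‖v‖ ^ 2 * ‖y‖ ^ 2 - ⟪v, y⟫ ^ 2))
    (hsupp : A ≤ B ^ δ₂) :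
    B ^ (δ₁ - 1) * |⟪y, η⟫ + (‖v‖ ^ 2 * ⟪y, η⟫ - ⟪v, y⟫ * ⟪v, η⟫)| ≤ 1 := by
  have hcs := wedgeForm_sq_le v y η
  have hy := wedge_sq_nonneg v y
  have hη := wedge_sq_nonneg v η
  have hv2 := sq_nonneg ‖v‖
  have hy2 := sq_nonneg ‖y‖
  have hη2 := sq_nonneg ‖η‖
  have hB1 : 1 ≤ B := by linarith
  have hB0 : 0 < B := by linarith
  have hsq : (⟪y, η⟫ + (‖v‖ ^ 2 * ⟪y, η⟫ - ⟪v, y⟫ * ⟪v, η⟫)) ^ 2 ≤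
      (B ^ ((1 + δ₂) / 2)) ^ 2 := by
    calc _ ≤ _ := hcs
      _ ≤ B * B ^ δ₂ := mul_le_mul (by linarith) (by linarith) (by linarith) hB0.le
      _ = (B ^ ((1 + δ₂) / 2)) ^ 2 := by
        rw [← Real.rpow_mul_natCast hB0.le, ← Real.rpow_one_add' hB0.le (by linarith)]
        congr 1
        push_cast
        ring
  have habs := abs_le_of_sq_le_sq hsq (Real.rpow_nonneg hB0.le _)
  calc _ ≤ B ^ (δ₁ - 1) * B ^ ((1 + δ₂) / 2) :=
        mul_le_mul_of_nonneg_left habs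
          (Real.rpow_nonneg hB0.le _)
    _ = B ^ (δ₁ - 1 + (1 + δ₂) / 2) := (Real.rpow_add hB0 _ _).symm
    _ ≤ 1 := Real.rpow_le_one_of_one_le_of_nonpos hB1 (by linarith)
end

section
/- Let s ∈ (0,1), γ ∈ ℝ with γ + 2s > 0, and let δ₁, δ₂ be real numbers with δ₁ ≤ 1, δ₂ > 0, and (δ₁ − 1)/δ₂ ≤ γ + 2s − 2. Let v, y, η ∈ ℝ^d and set A = 1 + |v|² + |η|² + |v∧η|² and B = 1 + |v|² + |y|² + |v∧y|². If A ≤ B^{δ₂}, then ⟨v⟩² · B^{δ₁−1} ≤ ⟨v⟩^{γ+2s}. -/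
/-!
Write `J = ⟨v⟩ ≥ 1`. By Cauchy–Schwarz `|v∧η|² ≥ 0`, so `J ≤ J² ≤ A ≤ B^δ₂`. The exponent
`p = (δ₁ - 1)/δ₂` is nonpositive, hence `B^(δ₁-1) = (B^δ₂)^p ≤ J^p ≤ J^(γ+2s-2)`;
multiplying by `J²` gives the claim.
-/

open scoped RealInnerProductSpace

/-- Bound for the error term `I₂` on the support of the cutoff:
if `A ≤ B^δ₂` then `⟨v⟩²·B^{δ₁−1} ≤ ⟨v⟩^{γ+2s}`. -/
theorem stmt_7 (s γ : ℝ) (hs0 : 0 < s) (hs1 : s < 1) (hγ : 0 < γ + 2 * s)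
    (δ₁ δ₂ : ℝ) (hδ₁ : δ₁ ≤ 1) (hδ₂ : 0 < δ₂)
    (hδ : (δ₁ - 1) / δ₂ ≤ γ + 2 * s - 2)
    (d : ℕ) (v y η : EuclideanSpace ℝ (Fin d))
    (A B : ℝ)
    (hA : A = 1 + ‖v‖ ^ 2 + ‖η‖ ^ 2 + (‖v‖ ^ 2 * ‖η‖ ^ 2 - ⟪v, η⟫ ^ 2))
    (hB : B = 1 + ‖v‖ ^ 2 + ‖y‖ ^ 2 + (‖v‖ ^ 2 * ‖y‖ ^ 2 - ⟪v, y⟫ ^ 2))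
    (hsupp : A ≤ B ^ δ₂) :
    Real.sqrt (1 + ‖v‖ ^ 2) ^ (2 : ℝ) * B ^ (δ₁ - 1) ≤
      Real.sqrt (1 + ‖v‖ ^ 2) ^ (γ + 2 * s) := by
  have wedge_nonneg : ∀ w : EuclideanSpace ℝ (Fin d), 0 ≤ ‖v‖ ^ 2 * ‖w‖ ^ 2 - ⟪v, w⟫ ^ 2 := by
    intro w
    have h := pow_le_pow_left₀ (abs_nonneg _) (abs_real_inner_le_norm v w) 2
    rw [sq_abs, mul_pow] at h
    linarith
  have hB0 : 0 < B := by
    rw [hB]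
    linarith [wedge_nonneg y, sq_nonneg ‖v‖, sq_nonneg ‖y‖]
  have hvA : 1 + ‖v‖ ^ 2 ≤ A := by
    rw [hA]
    linarith [wedge_nonneg η, sq_nonneg ‖η‖]
  set J := Real.sqrt (1 + ‖v‖ ^ 2) with hJ
  have hJ1 : 1 ≤ J := Real.one_le_sqrt.mpr (by linarith [sq_nonneg ‖v‖])
  have hJ0 : 0 < J := by linarith
  have hJsq : J ^ 2 = 1 + ‖v‖ ^ 2 := Real.sq_sqrt (by positivity)
  have hJB : J ≤ B ^ δ₂ := by nlinarith
  have hp : (δ₁ - 1) / δ₂ ≤ 0 := div_nonpos_of_nonpos_of_nonneg (by linarith) hδ₂.le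
  have hBp : B ^ (δ₁ - 1) ≤ J ^ (γ + 2 * s - 2) := calc
    B ^ (δ₁ - 1) = (B ^ δ₂) ^ ((δ₁ - 1) / δ₂) := by
      rw [← Real.rpow_mul hB0.le, mul_div_cancel₀ _ hδ₂.ne']
    _ ≤ J ^ ((δ₁ - 1) / δ₂) := Real.rpow_le_rpow_of_nonpos hJ0 hJB hp
    _ ≤ J ^ (γ + 2 * s - 2) := Real.rpow_le_rpow_of_exponent_le hJ1 hδ
  calc J ^ (2 : ℝ) * B ^ (δ₁ - 1) ≤ J ^ (2 : ℝ) * J ^ (γ + 2 * s - 2) := by gcongr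
    _ = J ^ (γ + 2 * s) := by
      rw [← Real.rpow_add hJ0]
      congr 1
      ring
end

section
/- Let s ∈ (0,1), γ ∈ ℝ with γ + 2s > 0, c = max{0, −γ/2}, and let δ₁, δ₂ be real numbers with δ₁ ≤ δ₂, δ₂ > 0, and δ₁/δ₂ + c ≤ s. Let v, y, η ∈ ℝ^d and set A = 1 + |v|² + |η|² + |v∧η|² and B = 1 + |v|² + |y|² + |v∧y|². If A ≤ B^{δ₂}, then B^{δ₁−1−δ₂} · (⟨y,η⟩ + (v∧y)·(v∧η))² ≤ ⟨v⟩^γ · A^s. -/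
open scoped RealInnerProductSpace

/-!
The expression `Q(y,η) = ⟨y,η⟩ + (v∧y)·(v∧η)` is a positive semidefinite symmetric bilinear form,
so Cauchy–Schwarz gives `Q(y,η)² ≤ Q(y,y) Q(η,η) ≤ B A`. The left side is therefore at most
`B^(δ₁-δ₂) A`. Since `δ₁ - δ₂ ≤ 0` and `A ≤ B^δ₂`, this is at most `A^(δ₁/δ₂) ≤ A^(s-c)` with
`c = max 0 (-γ/2)`. Finally `1 ≤ 1 + |v|² ≤ A` gives `⟨v⟩^(-γ) ≤ (1 + |v|²)^c ≤ A^c`, which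
absorbs the loss `A^(-c)`.
-/

/-- Cauchy–Schwarz for the form `(y, η) ↦ ⟨y,η⟩ + (v∧y)·(v∧η)`. -/
lemma wedge_form_cauchy_schwarz {E : Type*} [NormedAddCommGroup E] [InnerProductSpace ℝ E]
    (v y η : E) :
    (⟪y, η⟫ + (‖v‖ ^ 2 * ⟪y, η⟫ - ⟪v, y⟫ * ⟪v, η⟫)) ^ 2 ≤
      (‖y‖ ^ 2 + (‖v‖ ^ 2 * ‖y‖ ^ 2 - ⟪v, y⟫ ^ 2)) *
        (‖η‖ ^ 2 + (‖v‖ ^ 2 * ‖η‖ ^ 2 - ⟪v, η⟫ ^ 2)) := by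
  -- The quadratic polynomial `t ↦ Q(t y + η, t y + η)` is nonnegative, so its discriminant is `≤ 0`.
  have h : ∀ t : ℝ, 0 ≤ (‖y‖ ^ 2 + (‖v‖ ^ 2 * ‖y‖ ^ 2 - ⟪v, y⟫ ^ 2)) * (t * t) +
      (2 * (⟪y, η⟫ + (‖v‖ ^ 2 * ⟪y, η⟫ - ⟪v, y⟫ * ⟪v, η⟫))) * t +
      (‖η‖ ^ 2 + (‖v‖ ^ 2 * ‖η‖ ^ 2 - ⟪v, η⟫ ^ 2)) := by
    intro t
    have h1 : ⟪v, t • y + η⟫ ^ 2 ≤ ‖v‖ ^ 2 * ‖t • y + η‖ ^ 2 := by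
      rw [← mul_pow]
      exact sq_le_sq' (by linarith [neg_le_of_abs_le (abs_real_inner_le_norm v (t • y + η))])
        (real_inner_le_norm _ _)
    have h2 : ‖t • y + η‖ ^ 2 = t ^ 2 * ‖y‖ ^ 2 + 2 * (t * ⟪y, η⟫) + ‖η‖ ^ 2 := by
      rw [norm_add_sq_real, norm_smul, real_inner_smul_left, mul_pow, Real.norm_eq_abs, sq_abs]
    have h3 : ⟪v, t • y + η⟫ = t * ⟪v, y⟫ + ⟪v, η⟫ := by
      rw [inner_add_right, real_inner_smul_right]
    have h4 : 0 ≤ ‖t • y + η‖ ^ 2 := by positivity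
    rw [h3] at h1
    rw [h2] at h1 h4
    nlinarith
  have hd := discrim_le_zero h
  unfold discrim at hd
  nlinarith

/-- Bound for the error term `I₃` on the support of the cutoff:
if `A ≤ B^δ₂` then `B^{δ₁−1−δ₂}·(⟨y,η⟩ + (v∧y)·(v∧η))² ≤ ⟨v⟩^γ·A^s`. -/
theorem stmt_8 (s γ : ℝ) (hs0 : 0 < s) (hs1 : s < 1) (hγ : 0 < γ + 2 * s)
    (δ₁ δ₂ : ℝ) (hδ₁₂ : δ₁ ≤ δ₂) (hδ₂ : 0 < δ₂)
    (hδ : δ₁ / δ₂ + max 0 (-γ / 2) ≤ s)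
    (d : ℕ) (v y η : EuclideanSpace ℝ (Fin d))
    (A B : ℝ)
    (hA : A = 1 + ‖v‖ ^ 2 + ‖η‖ ^ 2 + (‖v‖ ^ 2 * ‖η‖ ^ 2 - ⟪v, η⟫ ^ 2))
    (hB : B = 1 + ‖v‖ ^ 2 + ‖y‖ ^ 2 + (‖v‖ ^ 2 * ‖y‖ ^ 2 - ⟪v, y⟫ ^ 2))
    (hsupp : A ≤ B ^ δ₂) :
    B ^ (δ₁ - 1 - δ₂) * (⟪y, η⟫ + (‖v‖ ^ 2 * ⟪y, η⟫ - ⟪v, y⟫ * ⟪v, η⟫)) ^ 2 ≤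
      Real.sqrt (1 + ‖v‖ ^ 2) ^ γ * A ^ s := by
  have hw : ∀ x : EuclideanSpace ℝ (Fin d), 0 ≤ ‖v‖ ^ 2 * ‖x‖ ^ 2 - ⟪v, x⟫ ^ 2 := by
    intro x
    rw [← mul_pow, sub_nonneg]
    exact sq_le_sq' (by linarith [neg_le_of_abs_le (abs_real_inner_le_norm v x)])
      (real_inner_le_norm _ _)
  have hV1 : 1 ≤ 1 + ‖v‖ ^ 2 := by nlinarith [sq_nonneg ‖v‖]
  have hVA : 1 + ‖v‖ ^ 2 ≤ A := by nlinarith [hw η, sq_nonneg ‖η‖]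
  have hVB : 1 + ‖v‖ ^ 2 ≤ B := by nlinarith [hw y, sq_nonneg ‖y‖]
  have hA0 : 0 < A := by linarith
  have hB0 : 0 < B := by linarith
  have hV0 : 0 < 1 + ‖v‖ ^ 2 := by linarith
  have hCS : (⟪y, η⟫ + (‖v‖ ^ 2 * ⟪y, η⟫ - ⟪v, y⟫ * ⟪v, η⟫)) ^ 2 ≤ B * A := by
    refine (wedge_form_cauchy_schwarz v y η).trans ?_
    exact mul_le_mul (by linarith) (by linarith)
      (by nlinarith [hw η, sq_nonneg ‖η‖]) hB0.le
  -- The exponent `δ₁/δ₂ - 1` is nonpositive, so the cutoff bound `A ≤ B^δ₂` is reversed.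
  have hcut : B ^ (δ₁ - δ₂) ≤ A ^ (δ₁ / δ₂ - 1) := by
    have he : δ₁ / δ₂ - 1 ≤ 0 := by
      rw [sub_nonpos, div_le_one hδ₂]; exact hδ₁₂
    have := Real.rpow_le_rpow_of_nonpos hA0 hsupp he
    rw [← Real.rpow_mul hB0.le] at this
    convert this using 2
    field_simp
  have hweight : 1 ≤ Real.sqrt (1 + ‖v‖ ^ 2) ^ γ * A ^ (max 0 (-γ / 2)) := by
    rw [Real.sqrt_eq_rpow, ← Real.rpow_mul hV0.le]
    calc (1 : ℝ) ≤ (1 + ‖v‖ ^ 2) ^ (1 / 2 * γ + max 0 (-γ / 2)) :=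
          Real.one_le_rpow hV1 (by linarith [le_max_right 0 (-γ / 2)])
      _ = (1 + ‖v‖ ^ 2) ^ (1 / 2 * γ) * (1 + ‖v‖ ^ 2) ^ (max 0 (-γ / 2)) :=
          Real.rpow_add hV0 _ _
      _ ≤ _ := by
          gcongr
  calc _ ≤ B ^ (δ₁ - 1 - δ₂) * (B * A) := by gcongr
    _ = B ^ (δ₁ - δ₂) * A := by
        rw [← mul_assoc, ← Real.rpow_add_one hB0.ne']
        congr 2
        ring
    _ ≤ A ^ (δ₁ / δ₂ - 1) * A := by gcongr
    _ = A ^ (δ₁ / δ₂) := by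
        rw [← Real.rpow_add_one hA0.ne', sub_add_cancel]
    _ ≤ A ^ (s - max 0 (-γ / 2)) :=
        Real.rpow_le_rpow_of_exponent_le (by linarith) (by linarith)
    _ ≤ (Real.sqrt (1 + ‖v‖ ^ 2) ^ γ * A ^ (max 0 (-γ / 2))) * A ^ (s - max 0 (-γ / 2)) :=
        le_mul_of_one_le_left (by positivity) hweight
    _ = _ := by
        rw [mul_assoc, ← Real.rpow_add hA0, add_sub_cancel]
end

section
/- Let s ∈ (0,1), γ ∈ ℝ with γ + 2s > 0, and K₀ ≥ 1. Define a(v,η) = ⟨v⟩^γ (1 + |v|² + |η|² + |v∧η|²)^s + K₀⟨v⟩^{γ+2s} for v, η ∈ ℝ^d. Then for every l ≥ 0 and k ≥ 0 there exists P ≥ 0 such that ⟨v⟩^l · ⟨η⟩^k ≤ a(v,η)^P for all v, η ∈ ℝ^d. -/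
open scoped RealInnerProductSpace

/-!
Write `X = ⟨v⟩ ≥ 1`, `Y = ⟨η⟩ ≥ 1`, `δ = γ + 2s > 0`. Since `|v∧η|² ≥ 0` (Cauchy–Schwarz), the symbol
`a` dominates both `X^δ` and `X^γ Y^(2s)`. The first bound gives `X ≤ a^(1/δ)`; the second then gives
`Y^(2s) ≤ X^|γ| a ≤ a^(|γ|/δ + 1)`, whatever the sign of `γ`. Hence
`P = l/δ + k (|γ|/δ + 1)/(2s)` works.
-/

/-- The estimate reduced to scalars: `X` and `Y` are controlled by powers of any `a` that dominates
`X^δ` and `X^γ Y^(2s)`. -/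
lemma weight_le_rpow {s γ δ X Y a l k : ℝ} (hs : 0 < s) (hδ : 0 < δ) (hX : 1 ≤ X) (hY : 1 ≤ Y)
    (h₁ : X ^ δ ≤ a) (h₂ : X ^ γ * Y ^ (2 * s) ≤ a) (hl : 0 ≤ l) (hk : 0 ≤ k) :
    X ^ l * Y ^ k ≤ a ^ (l / δ + k * ((|γ| / δ + 1) / (2 * s))) := by
  have hX0 : 0 < X := by linarith
  have hY0 : 0 < Y := by linarith
  have ha : 0 < a := (Real.rpow_pos_of_pos hX0 δ).trans_le h₁
  have hXp : ∀ p : ℝ, 0 ≤ p → X ^ p ≤ a ^ (p / δ) := fun p hp => by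
    calc X ^ p = (X ^ δ) ^ (p / δ) := by
          rw [← Real.rpow_mul hX0.le]; congr 1; field_simp
      _ ≤ a ^ (p / δ) := Real.rpow_le_rpow (by positivity) h₁ (by positivity)
  have hY2s : Y ^ (2 * s) ≤ a ^ (|γ| / δ + 1) := by
    calc Y ^ (2 * s) = X ^ (-γ) * (X ^ γ * Y ^ (2 * s)) := by
          rw [← mul_assoc, ← Real.rpow_add hX0]; simp
      _ ≤ X ^ |γ| * a := by
          gcongr
          exact neg_le_abs γ
      _ ≤ a ^ (|γ| / δ) * a := by
          gcongr
          exact hXp _ (abs_nonneg γ)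
      _ = a ^ (|γ| / δ + 1) := by rw [Real.rpow_add ha, Real.rpow_one]
  have hYk : Y ^ k ≤ a ^ (k * ((|γ| / δ + 1) / (2 * s))) := by
    calc Y ^ k = (Y ^ (2 * s)) ^ (k / (2 * s)) := by
          rw [← Real.rpow_mul hY0.le]; congr 1; field_simp
      _ ≤ (a ^ (|γ| / δ + 1)) ^ (k / (2 * s)) :=
          Real.rpow_le_rpow (by positivity) hY2s (by positivity)
      _ = a ^ (k * ((|γ| / δ + 1) / (2 * s))) := by
          rw [← Real.rpow_mul ha.le]; congr 1; ring
  rw [Real.rpow_add ha]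
  exact mul_le_mul (hXp l hl) hYk (by positivity) (by positivity)

/-- Regeneration of polynomial weights by the symbol
`a(v,η) = ⟨v⟩^γ(1+|v|²+|η|²+|v∧η|²)^s + K₀⟨v⟩^{γ+2s}`:
for every `l, k ≥ 0` there is `P ≥ 0` with `⟨v⟩^l⟨η⟩^k ≤ a(v,η)^P`. -/
theorem stmt_9 (s γ K₀ : ℝ) (hs0 : 0 < s) (hs1 : s < 1) (hγ : 0 < γ + 2 * s)
    (hK₀ : 1 ≤ K₀) (d : ℕ) :
    ∀ l k : ℝ, 0 ≤ l → 0 ≤ k → ∃ P : ℝ, 0 ≤ P ∧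
      ∀ v η : EuclideanSpace ℝ (Fin d),
        Real.sqrt (1 + ‖v‖ ^ 2) ^ l * Real.sqrt (1 + ‖η‖ ^ 2) ^ k ≤
          (Real.sqrt (1 + ‖v‖ ^ 2) ^ γ *
              (1 + ‖v‖ ^ 2 + ‖η‖ ^ 2 + (‖v‖ ^ 2 * ‖η‖ ^ 2 - ⟪v, η⟫ ^ 2)) ^ s +
            K₀ * Real.sqrt (1 + ‖v‖ ^ 2) ^ (γ + 2 * s)) ^ P := by
  intro l k hl hk
  refine ⟨l / (γ + 2 * s) + k * ((|γ| / (γ + 2 * s) + 1) / (2 * s)), by positivity, fun v η => ?_⟩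
  have hX : 1 ≤ √(1 + ‖v‖ ^ 2) := Real.one_le_sqrt.2 (by nlinarith [sq_nonneg ‖v‖])
  have hY : 1 ≤ √(1 + ‖η‖ ^ 2) := Real.one_le_sqrt.2 (by nlinarith [sq_nonneg ‖η‖])
  have hwedge : 0 ≤ ‖v‖ ^ 2 * ‖η‖ ^ 2 - ⟪v, η⟫ ^ 2 := by
    have h := sq_le_sq.2 ((abs_real_inner_le_norm v η).trans (le_abs_self _))
    rw [mul_pow] at h
    linarith
  have hXδ : 0 ≤ √(1 + ‖v‖ ^ 2) ^ (γ + 2 * s) := by positivity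
  have hbase : √(1 + ‖η‖ ^ 2) ^ (2 * s) ≤
      (1 + ‖v‖ ^ 2 + ‖η‖ ^ 2 + (‖v‖ ^ 2 * ‖η‖ ^ 2 - ⟪v, η⟫ ^ 2)) ^ s := by
    rw [Real.rpow_mul (Real.sqrt_nonneg _), Real.rpow_two, Real.sq_sqrt (by positivity)]
    exact Real.rpow_le_rpow (by positivity) (by nlinarith [sq_nonneg ‖v‖]) hs0.le
  refine weight_le_rpow hs0 hγ hX hY ?_ ?_ hl hk
  · have h : 0 ≤ √(1 + ‖v‖ ^ 2) ^ γ *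
        (1 + ‖v‖ ^ 2 + ‖η‖ ^ 2 + (‖v‖ ^ 2 * ‖η‖ ^ 2 - ⟪v, η⟫ ^ 2)) ^ s := by positivity
    nlinarith
  · have h := mul_le_mul_of_nonneg_left hbase
      (Real.rpow_nonneg (Real.sqrt_nonneg (1 + ‖v‖ ^ 2)) γ)
    nlinarith
end

section
/- Let s ∈ (0,1), γ ∈ ℝ with γ + 2s > 0, and K₀ ≥ 1. Define a(v,η) = ⟨v⟩^γ (1 + |v|² + |η|² + |v∧η|²)^s + K₀⟨v⟩^{γ+2s}. Then for every l ≥ 0, k ≥ 0 and δ ∈ (0,1] there exists p₀ ≥ 1 such that for every p ≥ p₀ there exists a constant C > 0 (depending on δ, l, k, p) with: for all t ∈ (0,1] and all v, η ∈ ℝ^d, t^{p−1/2} ≤ δ · a(v,η)^{1/2} · t^p + C · ⟨v⟩^{−l} ⟨η⟩^{−k}. -/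
open scoped RealInnerProductSpace

/-!
Write `V = ⟨v⟩`, `N = ⟨η⟩`. Since `1 + |v|² + |η|² + |v∧η|²` dominates both `V²` and `N²`,
splitting its exponent `s` as `ε/2 + (s - ε/2)` shows `a ≥ V^(γ+2s-ε) N^ε ≥ V^ε N^ε` for
`ε = min(s, (γ+2s)/2) > 0` (`weight_lower_bound`).

If `δ a^{1/2} t^{1/2} ≥ 1`, the first term alone dominates `t^{p-1/2}`. Otherwise
`t^{1/2} ≤ δ⁻¹ a^{-1/2} ≤ δ⁻¹ (V N)^{-ε/2}`, and raising this to the power `2p-1` gives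
`t^{p-1/2} ≤ δ^{-(2p-1)} (V N)^{-ε(p-1/2)}`, which is at most `δ^{-(2p-1)} V^{-l} N^{-k}` as soon as
`ε(p-1/2) ≥ l + k` (`absorb`).
-/

/-- Polynomial lower bound of the weight in both variables; `Q` plays the role of
`1 + |v|² + |η|² + |v∧η|²`. -/
lemma weight_lower_bound {s γ ε V N Q : ℝ} (hε : 0 < ε) (hεs : ε ≤ s) (hεγ : 2 * ε ≤ γ + 2 * s)
    (hV : 1 ≤ V) (hN : 1 ≤ N) (hQV : V ^ 2 ≤ Q) (hQN : N ^ 2 ≤ Q) :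
    V ^ ε * N ^ ε ≤ V ^ γ * Q ^ s := by
  have hV0 : 0 < V := by linarith
  have hN0 : 0 < N := by linarith
  have hQ0 : 0 < Q := lt_of_lt_of_le (by positivity) hQV
  have h1 : N ^ ε ≤ Q ^ (ε / 2) := by
    calc N ^ ε = (N ^ 2) ^ (ε / 2) := by
          rw [← Real.rpow_natCast_mul hN0.le]; congr 1; push_cast; ring
      _ ≤ _ := Real.rpow_le_rpow (by positivity) hQN (by linarith)
  have h2 : V ^ (2 * s - ε) ≤ Q ^ (s - ε / 2) := by
    calc V ^ (2 * s - ε) = (V ^ 2) ^ (s - ε / 2) := by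
          rw [← Real.rpow_natCast_mul hV0.le]; congr 1; push_cast; ring
      _ ≤ _ := Real.rpow_le_rpow (by positivity) hQV (by linarith)
  calc V ^ ε * N ^ ε ≤ V ^ (γ + (2 * s - ε)) * N ^ ε := by
        gcongr
        linarith
    _ = V ^ γ * (V ^ (2 * s - ε) * N ^ ε) := by rw [Real.rpow_add hV0]; ring
    _ ≤ V ^ γ * (Q ^ (s - ε / 2) * Q ^ (ε / 2)) := by gcongr
    _ = V ^ γ * Q ^ s := by rw [← Real.rpow_add hQ0]; congr 2; ring

/-- The absorption inequality for any weight `a` bounded below by `(V N)^ε`. -/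
lemma absorb {l k δ ε p t a V N : ℝ} (hl : 0 ≤ l) (hk : 0 ≤ k) (hδ : 0 < δ)
    (hp : 1 / 2 ≤ p) (hpε : l + k ≤ ε * (p - 1 / 2)) (ht : 0 < t)
    (hV : 1 ≤ V) (hN : 1 ≤ N) (ha : V ^ ε * N ^ ε ≤ a) :
    t ^ (p - 1 / 2) ≤ δ * a ^ (1 / 2 : ℝ) * t ^ p + δ⁻¹ ^ (2 * p - 1) * V ^ (-l) * N ^ (-k) := by
  have hV0 : 0 < V := by linarith
  have hN0 : 0 < N := by linarith
  have ha0 : 0 < a := lt_of_lt_of_le (by positivity) ha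
  by_cases h : 1 ≤ δ * a ^ (1 / 2 : ℝ) * t ^ (1 / 2 : ℝ)
  · have e : t ^ p = t ^ (1 / 2 : ℝ) * t ^ (p - 1 / 2) := by
      rw [← Real.rpow_add ht]; congr 1; ring
    calc t ^ (p - 1 / 2) ≤ (δ * a ^ (1 / 2 : ℝ) * t ^ (1 / 2 : ℝ)) * t ^ (p - 1 / 2) :=
          le_mul_of_one_le_left (by positivity) h
      _ = δ * a ^ (1 / 2 : ℝ) * t ^ p := by rw [e]; ring
      _ ≤ _ := le_add_of_nonneg_right (by positivity)
  · push Not at h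
    have hb : V ^ (ε / 2) * N ^ (ε / 2) ≤ a ^ (1 / 2 : ℝ) := by
      calc V ^ (ε / 2) * N ^ (ε / 2) = (V ^ ε * N ^ ε) ^ (1 / 2 : ℝ) := by
            rw [Real.mul_rpow (by positivity) (by positivity), ← Real.rpow_mul hV0.le,
              ← Real.rpow_mul hN0.le]
            ring_nf
        _ ≤ _ := Real.rpow_le_rpow (by positivity) ha (by norm_num)
    have hr : t ^ (1 / 2 : ℝ) ≤ δ⁻¹ * (V ^ (-(ε / 2)) * N ^ (-(ε / 2))) := by
      rw [Real.rpow_neg hV0.le, Real.rpow_neg hN0.le, ← mul_inv, ← mul_inv,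
        le_inv_comm₀ (by positivity) (by positivity), le_inv_comm₀ (by positivity) (by positivity),
        le_inv_comm₀ (by positivity) (by positivity), ← one_div, le_div_iff₀ (by positivity)]
      refine le_trans ?_ h.le
      gcongr
    have hle : t ^ (p - 1 / 2) ≤ δ⁻¹ ^ (2 * p - 1) * V ^ (-l) * N ^ (-k) := by
      calc t ^ (p - 1 / 2) = (t ^ (1 / 2 : ℝ)) ^ (2 * p - 1) := by
            rw [← Real.rpow_mul ht.le]; congr 1; ring
        _ ≤ (δ⁻¹ * (V ^ (-(ε / 2)) * N ^ (-(ε / 2)))) ^ (2 * p - 1) :=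
            Real.rpow_le_rpow (by positivity) hr (by linarith)
        _ = δ⁻¹ ^ (2 * p - 1) * V ^ (-(ε / 2) * (2 * p - 1)) * N ^ (-(ε / 2) * (2 * p - 1)) := by
            rw [Real.mul_rpow (by positivity) (by positivity),
              Real.mul_rpow (by positivity) (by positivity), ← Real.rpow_mul hV0.le,
              ← Real.rpow_mul hN0.le, mul_assoc]
        _ ≤ _ := by
            gcongr
            · linarith
            · linarith
    exact hle.trans (le_add_of_nonneg_left (by positivity))

/-- Absorption of the time weight into the symbol `a`:
for every `l, k ≥ 0` and `δ ∈ (0,1]` there is `p₀ ≥ 1` such that for every `p ≥ p₀`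
there is `C > 0` with `t^{p−1/2} ≤ δ·a(v,η)^{1/2}·t^p + C·⟨v⟩^{−l}⟨η⟩^{−k}`
for all `t ∈ (0,1]` and all `v, η`. -/
theorem stmt_12 (s γ K₀ : ℝ) (hs0 : 0 < s) (hs1 : s < 1) (hγ : 0 < γ + 2 * s)
    (hK₀ : 1 ≤ K₀) (d : ℕ) :
    ∀ l k δ : ℝ, 0 ≤ l → 0 ≤ k → 0 < δ → δ ≤ 1 →
      ∃ p₀ : ℝ, 1 ≤ p₀ ∧ ∀ p : ℝ, p₀ ≤ p → ∃ C : ℝ, 0 < C ∧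
        ∀ t : ℝ, 0 < t → t ≤ 1 → ∀ v η : EuclideanSpace ℝ (Fin d),
          t ^ (p - 1 / 2) ≤
            δ * (Real.sqrt (1 + ‖v‖ ^ 2) ^ γ *
                  (1 + ‖v‖ ^ 2 + ‖η‖ ^ 2 + (‖v‖ ^ 2 * ‖η‖ ^ 2 - ⟪v, η⟫ ^ 2)) ^ s +
                K₀ * Real.sqrt (1 + ‖v‖ ^ 2) ^ (γ + 2 * s)) ^ (1 / 2 : ℝ) * t ^ p +
              C * Real.sqrt (1 + ‖v‖ ^ 2) ^ (-l) * Real.sqrt (1 + ‖η‖ ^ 2) ^ (-k) := by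
  intro l k δ hl hk hδ _
  obtain ⟨ε, hε, hεs, hεγ⟩ : ∃ ε : ℝ, 0 < ε ∧ ε ≤ s ∧ 2 * ε ≤ γ + 2 * s := by
    refine ⟨min s ((γ + 2 * s) / 2), lt_min hs0 (by linarith), min_le_left _ _, ?_⟩
    linarith [min_le_right s ((γ + 2 * s) / 2)]
  have hlk : 0 ≤ (l + k) / ε := by positivity
  refine ⟨1 + (l + k) / ε, by linarith, fun p hp => ⟨δ⁻¹ ^ (2 * p - 1), by positivity, ?_⟩⟩
  intro t ht _ v η
  have hpε : l + k ≤ ε * (p - 1 / 2) := by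
    rw [← div_le_iff₀' hε]; linarith
  have one_le_bracket (w : EuclideanSpace ℝ (Fin d)) : 1 ≤ Real.sqrt (1 + ‖w‖ ^ 2) :=
    Real.one_le_sqrt.mpr (by linarith [sq_nonneg ‖w‖])
  -- Cauchy–Schwarz: `|v∧η|² ≥ 0`.
  have hcs : ⟪v, η⟫ ^ 2 ≤ ‖v‖ ^ 2 * ‖η‖ ^ 2 := by
    rw [← mul_pow, ← sq_abs]
    exact pow_le_pow_left₀ (abs_nonneg _) (abs_real_inner_le_norm v η) 2
  refine absorb hl hk hδ (by linarith) hpε ht (one_le_bracket v) (one_le_bracket η) ?_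
  refine (weight_lower_bound hε hεs hεγ (one_le_bracket v) (one_le_bracket η)
    (Q := 1 + ‖v‖ ^ 2 + ‖η‖ ^ 2 + (‖v‖ ^ 2 * ‖η‖ ^ 2 - ⟪v, η⟫ ^ 2)) ?_ ?_).trans
    (le_add_of_nonneg_right (by positivity))
  · rw [Real.sq_sqrt (by positivity)]
    linarith [sq_nonneg ‖η‖]
  · rw [Real.sq_sqrt (by positivity)]
    linarith [sq_nonneg ‖v‖]
end
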